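/- arXiv:2510.16620 — 4 statements merged into one kernel-verified Lean document; each statement's English description precedes it below -/
import Mathlib

section
/- Let q ≥ k ≥ 1 be natural numbers, let F be a finite field with 2^q elements, and let π : F → (𝔽₂)^k be a surjective 𝔽₂-linear map. For the seeded hash family {H_s : s ∈ F \ {0}} defined by H_s(x) = π(s · x), the family is 2-universal: for all x₁, x₂ ∈ F with x₁ ≠ x₂, the number of seeds s ∈ F \ {0} with H_s(x₁) = H_s(x₂) satisfies 2^k · card{s ∈ F \ {0} : π(s·x₁) = π(s·x₂)} ≤ 2^q − 1; equivalently, if S is chosen uniformly at random from F \ {0}, then P(H_S(x₁) = H_S(x₂)) ≤ 2^{−k}. -/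
/-!
For distinct `x₁, x₂`, multiplication by the nonzero element `x₁ - x₂` is a bijection of `F`, so
`f s = π (s * (x₁ - x₂))` is a surjective linear map onto `(𝔽₂)^k`, and its kernel has `2 ^ q / 2 ^ k`
elements. The colliding seeds are the kernel elements other than `0`, hence
`2 ^ k * card = 2 ^ q - 2 ^ k ≤ 2 ^ q - 1`.
-/


/-- 2-universality of the seeded hash family `H_s(x) = π (s * x)` on a finite field `F`
with `2^q` elements, where `π : F → (𝔽₂)^k` is a surjective `𝔽₂`-linear map and the seed
`s` ranges over `F \ {0}`:  for distinct `x₁ x₂`,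
`2^k * card {s ≠ 0 | π (s*x₁) = π (s*x₂)} ≤ 2^q - 1`, i.e. the collision probability
under a uniform seed is at most `2^{-k}`. -/
theorem seeded_hash_two_universal
    {q k : ℕ} (hk : 1 ≤ k) (hkq : k ≤ q)
    (F : Type*) [Field F] [Fintype F] [Algebra (ZMod 2) F]
    (hcard : Fintype.card F = 2 ^ q)
    (π : F →ₗ[ZMod 2] (Fin k → ZMod 2))
    (hπ : Function.Surjective π)
    (x₁ x₂ : F) (hx : x₁ ≠ x₂) :
    2 ^ k * Nat.card {s : F // s ≠ 0 ∧ π (s * x₁) = π (s * x₂)} ≤ 2 ^ q - 1 := by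
  -- A collision is a nonzero element of the kernel of `s ↦ π (s * (x₁ - x₂))`.
  let f : F →ₗ[ZMod 2] (Fin k → ZMod 2) := π ∘ₗ LinearMap.mulRight (ZMod 2) (x₁ - x₂)
  have hfx (s : F) : f s = π (s * x₁) - π (s * x₂) := by
    simp [f, mul_sub]
  have hf : Function.Surjective f := by
    intro y
    obtain ⟨z, rfl⟩ := hπ y
    exact ⟨z / (x₁ - x₂), by simp [f, div_mul_cancel₀ z (sub_ne_zero.mpr hx)]⟩
  have hker : Nat.card f.toAddMonoidHom.ker * 2 ^ k = 2 ^ q := by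
    have h := AddSubgroup.card_mul_index f.toAddMonoidHom.ker
    have hr : f.toAddMonoidHom.range = ⊤ := AddMonoidHom.range_eq_top.mpr hf
    rw [AddSubgroup.index_ker, hr, AddSubgroup.card_top] at h
    simpa [Nat.card_eq_fintype_card, hcard, ZMod.card] using h
  have hlt : Nat.card {s : F // s ≠ 0 ∧ π (s * x₁) = π (s * x₂)}
      < Nat.card f.toAddMonoidHom.ker := by
    refine Set.ncard_lt_ncard (s := {s : F | s ≠ 0 ∧ π (s * x₁) = π (s * x₂)})
      (t := (f.toAddMonoidHom.ker : Set F)) ?_ (Set.toFinite _)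
    refine Set.ssubset_iff_exists.mpr ⟨fun s hs => ?_, 0, zero_mem _, fun h => h.1 rfl⟩
    change f s = 0
    rw [hfx, hs.2, sub_self]
  have hk1 : 1 ≤ 2 ^ k := Nat.one_le_two_pow
  have hmul := Nat.mul_le_mul_left (2 ^ k) (Nat.succ_le_of_lt hlt)
  rw [mul_comm (2 ^ k) (Nat.card f.toAddMonoidHom.ker), hker, Nat.mul_succ] at hmul
  omega
end

section
/- Let μ and ν be probability measures on a measurable space Ω with μ absolutely continuous with respect to ν, and let T : Ω → ℝ be a measurable function such that T is μ-integrable and exp ∘ T is ν-integrable. Then the Donsker–Varadhan functional is a lower bound on the Kullback–Leibler divergence: ∫ T dμ − log( ∫ exp(T) dν ) ≤ KL(μ ‖ ν). -/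
/-!
The inequality is Gibbs' inequality for the exponentially tilted measure
`ν.tilted T`, whose density with respect to `ν` is `exp T / ∫ exp T dν`. Since `exp T > 0` is
`ν`-integrable, this is a probability measure with `μ ≪ ν ≪ ν.tilted T`, and when `log (dμ/dν)` is
`μ`-integrable,
`∫ log (dμ/dν) dμ - (∫ T dμ - log ∫ exp T dν) = ∫ log (dμ/d(ν.tilted T)) dμ ≥ 0`.
The equality is `integral_llr_tilted_right` and the nonnegativity is
`InformationTheory.integral_llr_add_sub_measure_univ_nonneg`.
-/


open MeasureTheory

/-- The Kullback–Leibler divergence `KL(μ ‖ ν)` as an extended real: it equals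
`∫ log (dμ/dν) dμ` when `μ ≪ ν` and this integral exists, and `+∞` otherwise. -/
noncomputable def klDiv {Ω : Type*} [MeasurableSpace Ω] (μ ν : Measure Ω) : EReal :=
  open scoped Classical in
  if μ ≪ ν ∧ Integrable (fun ω => Real.log (μ.rnDeriv ν ω).toReal) μ then
    ((∫ ω, Real.log (μ.rnDeriv ν ω).toReal ∂μ : ℝ) : EReal)
  else ⊤

/-- Donsker–Varadhan variational lower bound on the Kullback–Leibler divergence:
for probability measures `μ ≪ ν` and a measurable function `T` with `T` `μ`-integrable
and `exp ∘ T` `ν`-integrable, `∫ T dμ − log (∫ exp T dν) ≤ KL(μ ‖ ν)`. -/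
theorem donsker_varadhan_le_klDiv
    {Ω : Type*} [MeasurableSpace Ω] (μ ν : Measure Ω)
    [IsProbabilityMeasure μ] [IsProbabilityMeasure ν]
    (hac : μ ≪ ν)
    (T : Ω → ℝ) (hTm : Measurable T)
    (hTμ : Integrable T μ)
    (hTν : Integrable (fun ω => Real.exp (T ω)) ν) :
    ((∫ ω, T ω ∂μ - Real.log (∫ ω, Real.exp (T ω) ∂ν) : ℝ) : EReal)
      ≤ klDiv μ ν := by
  -- Where the divergence is `⊤` there is nothing to prove.
  unfold klDiv
  split_ifs with h
  swap
  · exact le_top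
  have h_llr : Integrable (llr μ ν) μ := h.2
  have : IsProbabilityMeasure (ν.tilted T) := isProbabilityMeasure_tilted hTν
  have hac' : μ ≪ ν.tilted T := hac.trans (absolutelyContinuous_tilted hTν)
  have gibbs := InformationTheory.integral_llr_add_sub_measure_univ_nonneg hac'
    (integrable_llr_tilted_right hac hTμ h_llr hTν)
  rw [integral_llr_tilted_right hac hTμ hTν h_llr] at gibbs
  simp only [probReal_univ, add_sub_cancel_right] at gibbs
  refine EReal.coe_le_coe_iff.mpr ?_
  change _ ≤ ∫ ω, llr μ ν ω ∂μ
  linarith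
end

section
/- Let f : ℝ → ℝ be a convex function with f(1) = 0, and let f* denote its convex (Fenchel) conjugate, f*(t) = sup_{x ≥ 0} ( t·x − f(x) ). Let μ and ν be probability measures on a measurable space Ω with μ absolutely continuous with respect to ν and with ν-integrable density dμ/dν, and let T : Ω → ℝ be a measurable function such that T is μ-integrable and f* ∘ T is ν-integrable. Then ∫ T dμ − ∫ f*(T) dν ≤ D_f(μ ‖ ν), where D_f(μ ‖ ν) = ∫ f(dμ/dν) dν is the f-divergence of μ from ν (assumed to exist). -/
open MeasureTheory

/-- Variational (Fenchel–Young) lower bound on an `f`-divergence: let `f : ℝ → ℝ` be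
convex with `f 1 = 0`, and let `fstar` be its Fenchel conjugate over the nonnegative
reals, `fstar t = sup_{x ≥ 0} (t·x − f x)`.  For probability measures `μ ≪ ν` with
`ν`-integrable density `dμ/dν`, and a measurable `T` with `T` `μ`-integrable and
`fstar ∘ T` `ν`-integrable, `∫ T dμ − ∫ fstar (T) dν ≤ D_f(μ ‖ ν)`, where
`D_f(μ ‖ ν) = ∫ f (dμ/dν) dν` (assumed to exist). -/
theorem fenchel_young_le_fDiv
    {Ω : Type*} [MeasurableSpace Ω] (μ ν : Measure Ω)
    [IsProbabilityMeasure μ] [IsProbabilityMeasure ν]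
    (f : ℝ → ℝ) (hf : ConvexOn ℝ Set.univ f) (hf1 : f 1 = 0)
    (fstar : ℝ → ℝ)
    (hfstar : ∀ t : ℝ, IsLUB {y : ℝ | ∃ x : ℝ, 0 ≤ x ∧ y = t * x - f x} (fstar t))
    (hac : μ ≪ ν)
    (hd : Integrable (fun ω => (μ.rnDeriv ν ω).toReal) ν)
    (T : Ω → ℝ) (hTm : Measurable T)
    (hTμ : Integrable T μ)
    (hfTν : Integrable (fun ω => fstar (T ω)) ν)
    (hDf : Integrable (fun ω => f ((μ.rnDeriv ν ω).toReal)) ν) :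
    ∫ ω, T ω ∂μ - ∫ ω, fstar (T ω) ∂ν
      ≤ ∫ ω, f ((μ.rnDeriv ν ω).toReal) ∂ν := by
  -- Change of measure: `∫ T dμ = ∫ (dμ/dν) • T dν`.
  have hint : Integrable (fun ω => (μ.rnDeriv ν ω).toReal • T ω) ν :=
    (integrable_rnDeriv_smul_iff hac).2 hTμ
  rw [← integral_rnDeriv_smul hac, ← integral_sub hint hfTν]
  refine integral_mono (hint.sub hfTν) hDf fun ω => ?_
  -- Pointwise Fenchel–Young at `x = dμ/dν`, a point of the set whose supremum is `fstar (T ω)`.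
  have h := (hfstar (T ω)).1 ⟨(μ.rnDeriv ν ω).toReal, ENNReal.toReal_nonneg, rfl⟩
  simp only [smul_eq_mul]
  linarith
end

section
/- Let μ and ν be probability measures on a measurable space Ω with μ absolutely continuous with respect to ν, and let T : Ω → ℝ be a measurable function such that T is μ-integrable and exp(T − 1) is ν-integrable. Then ∫ T dμ − ∫ exp(T − 1) dν ≤ KL(μ ‖ ν). -/
/-! With `r = dμ/dν`, the Fenchel–Young inequality for `x ↦ x log x` and its conjugate
`t ↦ exp (t - 1)` gives `r T - exp (T - 1) ≤ r log r` pointwise. Integrating against `ν` and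
rewriting `∫ r f dν = ∫ f dμ` yields the bound when `log r` is `μ`-integrable; otherwise the
right-hand side is `+∞`. -/

open MeasureTheory

/-- Fenchel–Young inequality for `x ↦ x log x` on `[0, ∞)`. -/
theorem mul_sub_exp_le_mul_log {r : ℝ} (hr : 0 ≤ r) (t : ℝ) :
    r * t - Real.exp (t - 1) ≤ r * Real.log r := by
  rcases hr.eq_or_lt with rfl | hr
  · simp [Real.exp_nonneg]
  -- the tangent-line bound `u + 1 ≤ exp u` at `u = t - 1 - log r`, multiplied by `r`
  · have h := mul_le_mul_of_nonneg_left (Real.add_one_le_exp (t - 1 - Real.log r)) hr.le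
    rw [Real.exp_sub (t - 1), Real.exp_log hr, mul_div_cancel₀ _ hr.ne'] at h
    linarith

/-- NWJ / KL-DIME variational lower bound on the Kullback–Leibler divergence:
for probability measures `μ ≪ ν` and a measurable `T` with `T` `μ`-integrable and
`exp (T − 1)` `ν`-integrable, `∫ T dμ − ∫ exp (T − 1) dν ≤ KL(μ ‖ ν)`. -/
theorem nwj_le_klDiv
    {Ω : Type*} [MeasurableSpace Ω] (μ ν : Measure Ω)
    [IsProbabilityMeasure μ] [IsProbabilityMeasure ν]
    (hac : μ ≪ ν)
    (T : Ω → ℝ) (hTm : Measurable T)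
    (hTμ : Integrable T μ)
    (hTν : Integrable (fun ω => Real.exp (T ω - 1)) ν) :
    ((∫ ω, T ω ∂μ - ∫ ω, Real.exp (T ω - 1) ∂ν : ℝ) : EReal)
      ≤ klDiv μ ν := by
  unfold klDiv
  split_ifs with h
  · rw [EReal.coe_le_coe_iff]
    obtain ⟨-, hlog⟩ := h
    rw [← integral_rnDeriv_smul hac (f := T),
      ← integral_rnDeriv_smul hac (f := fun ω => Real.log (μ.rnDeriv ν ω).toReal)]
    have hT := (integrable_rnDeriv_smul_iff hac).2 hTμ
    have hL := (integrable_rnDeriv_smul_iff hac).2 hlog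
    rw [← integral_sub hT hTν]
    exact integral_mono (hT.sub hTν) hL fun ω =>
      mul_sub_exp_le_mul_log ENNReal.toReal_nonneg (T ω)
  · exact le_top
end
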